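/- Let σ = (r_1,...,r_k) be a composition of a positive integer n with partial sums s_i, and for m ∈ ℕ let N(m) denote the number of points (a_1,...,a_n) ∈ ℕ^n with a_1 + ... + a_{s_i} ≤ m·s_i for all i ∈ {1,...,k}. Let W_σ be the set of words w = (w_1,...,w_n) with entries in {1,...,n} such that for every i ∈ {1,...,k}, at least s_i entries of w are ≤ s_i; for w ∈ W_σ let asc(w) be the number of indices i ∈ {1,...,n} with w_{i-1} < w_i, where w_0 := 1. Then, as an identity of formal power series in t, (1−t)^{n+1} · Σ_{m≥0} N(m) t^m = Σ_{w ∈ W_σ} t^{asc(w)} (i.e., the h*-polynomial of the composition polytope Q_σ equals Σ_{w ∈ W_σ} t^{asc(w)}). -/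

import Mathlib

open Finset Polynomial

/-- `pSum σ i = r₁ + ⋯ + rᵢ`, the `i`-th partial sum of the composition `σ`. -/
def pSum (σ : List ℕ) (i : ℕ) : ℕ := (σ.take i).sum

/-- Membership in the set `P_σ ⊆ ℕⁿ`: the partial sum of the first `s_i`
coordinates is at most `s_i` for every `i ∈ [k]`. -/
def memP (n : ℕ) (σ : List ℕ) (a : Fin n → ℕ) : Prop :=
  ∀ i, 1 ≤ i → i ≤ σ.length →
    (∑ j ∈ Finset.univ.filter (fun j : Fin n => (j : ℕ) < pSum σ i), a j) ≤ pSum σ i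

/-- The number of nonzero coordinates of a tuple. -/
def nonzeroCount {n : ℕ} (a : Fin n → ℕ) : ℕ :=
  (Finset.univ.filter (fun j => a j ≠ 0)).card

/-- `h_i(σ)`: the number of points of `P_σ` with exactly `i` nonzero coordinates. -/
noncomputable def hVec (n : ℕ) (σ : List ℕ) (i : ℕ) : ℕ :=
  {a : Fin n → ℕ | memP n σ a ∧ nonzeroCount a = i}.ncard

/-- The number of lattice points of the `m`-th dilate of the composition
polytope `Q_σ`, i.e. the Ehrhart polynomial of `Q_σ` evaluated at `m`. -/
noncomputable def ehrCount (n : ℕ) (σ : List ℕ) (m : ℕ) : ℕ :=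
  {a : Fin n → ℕ | ∀ i, 1 ≤ i → i ≤ σ.length →
    (∑ j ∈ Finset.univ.filter (fun j : Fin n => (j : ℕ) < pSum σ i), a j)
      ≤ m * pSum σ i}.ncard

/-- The number of ascents of the word `w = (w₁, …, w_n)`, where `w₀ := 1`:
the number of indices `i ∈ [n]` with `w_{i-1} < w_i`. -/
def ascCount {n : ℕ} (w : Fin n → ℕ) : ℕ :=
  (Finset.univ.filter (fun j : Fin n =>
    (if (j : ℕ) = 0 then 1
     else w ⟨(j : ℕ) - 1, Nat.lt_of_le_of_lt (Nat.sub_le _ _) j.isLt⟩) < w j)).card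

def psm {n : ℕ} (a : Fin n → ℕ) (j : Fin n) : ℕ := ∑ i ∈ Finset.univ.filter (fun i : Fin n => (i : ℕ) < j + 1), a i

def prv {n : ℕ} (b : Fin n → ℕ) (z : ℕ) (j : Fin n) : ℕ :=
  if (j : ℕ) = 0 then z else b ⟨(j : ℕ) - 1, Nat.lt_of_le_of_lt (Nat.sub_le _ _) j.isLt⟩

def dff {n : ℕ} (b : Fin n → ℕ) (j : Fin n) : ℕ := b j - prv b 0 j

lemma psm_rec {n : ℕ} (a : Fin n → ℕ) (j : Fin n) : psm a j = prv (psm a) 0 j + a j := by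
  have h : Finset.univ.filter (fun i : Fin n => (i : ℕ) < j + 1)
      = insert j (Finset.univ.filter (fun i : Fin n => (i : ℕ) < j)) := by
    ext i; simp [Fin.ext_iff]; omega
  unfold psm prv
  rw [h, Finset.sum_insert (by simp), add_comm]
  congr 1
  split_ifs with h0
  · simp [h0]
  · apply Finset.sum_congr _ (fun _ _ => rfl)
    ext i; simp; omega

lemma psm_uniq {n : ℕ} (a b : Fin n → ℕ) (h : ∀ j, b j = prv b 0 j + a j) : b = psm a := by
  have : ∀ k (hk : k < n), b ⟨k, hk⟩ = psm a ⟨k, hk⟩ := by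
    intro k
    induction k with
    | zero => intro hk; rw [h, psm_rec]; simp [prv]
    | succ k ih => intro hk; rw [h, psm_rec]; simp [prv, ih (by omega)]
  ext j; exact this j j.2

lemma psm_dff {n : ℕ} (b : Fin n → ℕ) (h : ∀ j, prv b 0 j ≤ b j) : psm (dff b) = b := by
  symm; apply psm_uniq; intro j; have := h j; unfold dff; omega

lemma dff_psm {n : ℕ} (a : Fin n → ℕ) : dff (psm a) = a := by
  ext j; have := psm_rec a j; unfold dff; omega

lemma mono_iff {n : ℕ} {α : Type*} [Preorder α] (b : Fin n → α) : Monotone b ↔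
    ∀ j : Fin n, (j : ℕ) ≠ 0 → b ⟨(j : ℕ) - 1, Nat.lt_of_le_of_lt (Nat.sub_le _ _) j.isLt⟩ ≤ b j := by
  constructor
  · intro h j hj; apply h; simp [Fin.le_def]
  · intro h
    cases n with
    | zero => intro x; exact x.elim0
    | succ n =>
      rw [Fin.monotone_iff_le_succ]
      intro i
      have := h i.succ (by simp)
      exact this

lemma mono_prv {n : ℕ} (b : Fin n → ℕ) : Monotone b ↔ ∀ j, prv b 0 j ≤ b j := by
  rw [mono_iff]
  apply forall_congr'; intro j; unfold prv
  split_ifs with h <;> simp [h]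

lemma psm_mono {n : ℕ} (a : Fin n → ℕ) : Monotone (psm a) := by
  rw [mono_prv]; intro j; have := psm_rec a j; omega

lemma count_le (n M : ℕ) : {e : Fin n → ℕ | ∑ i, e i ≤ M}.ncard = (n + M).choose n := by
  have h1 : {e : Fin n → ℕ | ∑ i, e i ≤ M}.ncard = {P : Fin (n+1) → ℕ | ∑ i, P i = M}.ncard := by
    apply Set.ncard_congr (fun (e : Fin n → ℕ) _ => (Fin.cons (M - ∑ i, e i) e : Fin (n+1) → ℕ))
    · intro e he; simp only [Set.mem_ofPred_eq] at *; rw [Fin.sum_univ_succ]; simp; omega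
    · intro a b _ _ h; exact (Fin.cons_inj.1 h).2
    · intro P hP
      simp only [Set.mem_ofPred_eq, Fin.sum_univ_succ] at hP
      refine ⟨Fin.tail P, ?_, ?_⟩
      · simp only [Set.mem_ofPred_eq, Fin.tail]; omega
      · conv_rhs => rw [← Fin.cons_self_tail P]
        congr 1
        simp only [Fin.tail]; omega
  rw [h1]
  have h2 := Nat.card_congr (Sym.equivNatSumOfFintype (Fin (n+1)) M)
  rw [Nat.card_eq_fintype_card, Sym.card_sym_eq_choose] at h2
  have h3 : Nat.card {P : Fin (n+1) → ℕ // ∑ i, P i = M} = {P : Fin (n+1) → ℕ | ∑ i, P i = M}.ncard := rfl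
  rw [← h3, ← h2]
  simp only [Fintype.card_fin]
  rw [show n + 1 + M - 1 = n + M by omega, Nat.choose_symm_add]

lemma psm_le {n : ℕ} (hn : 0 < n) (a : Fin n → ℕ) (m : ℕ) : (∀ j, psm a j ≤ m) ↔ ∑ i, a i ≤ m := by
  constructor
  · intro h
    have := h ⟨n - 1, by omega⟩
    unfold psm at this
    rwa [Finset.filter_true_of_mem] at this
    intro i _; have := i.2; simp; omega
  · intro h j
    exact le_trans (Finset.sum_le_sum_of_subset (Finset.filter_subset _ _)) h

lemma count_f {n : ℕ} (hn : 0 < n) (d : Fin n → ℕ) (m : ℕ) :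
    {f : Fin n → ℕ | (∀ j, prv f 0 j + d j ≤ f j) ∧ ∀ j, f j ≤ m}.ncard
      = if ∑ j, d j ≤ m then (n + (m - ∑ j, d j)).choose n else 0 := by
  split_ifs with h
  · rw [← count_le]
    symm
    apply Set.ncard_congr (fun e _ => psm (e + d))
    · intro e he
      simp only [Set.mem_ofPred_eq] at *
      refine ⟨fun j => ?_, (psm_le hn _ _).2 ?_⟩
      · have := psm_rec (e + d) j; simp only [Pi.add_apply] at this; omega
      · simp [Finset.sum_add_distrib]; omega
    · intro a b _ _ hab
      have := congrArg dff hab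
      rw [dff_psm, dff_psm] at this
      exact add_right_cancel this
    · rintro f ⟨h1, h2⟩
      have h3 : dff f - d + d = dff f := by
        ext j; have := h1 j; simp [dff]; omega
      have h4 : psm (dff f) = f := psm_dff f (fun j => by have := h1 j; omega)
      refine ⟨dff f - d, ?_, ?_⟩
      · rw [← h4, psm_le hn, ← h3] at h2
        simp only [Set.mem_ofPred_eq, Pi.add_apply, Finset.sum_add_distrib] at *
        omega
      · rw [h3, h4]
  · convert Set.ncard_empty (Fin n → ℕ)
    rw [Set.eq_empty_iff_forall_notMem]
    rintro f ⟨h1, h2⟩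
    have h4 : psm (dff f) = f := psm_dff f (fun j => by have := h1 j; omega)
    rw [← h4, psm_le hn] at h2
    apply h
    refine le_trans (Finset.sum_le_sum fun j _ => ?_) h2
    have := h1 j
    unfold dff; omega

lemma sort_card {n : ℕ} {α β γ : Type} [LinearOrder β] [LinearOrder γ] (k1 : α → β) (k2 : α → γ)
    (V : Set α) (h1 : Set.InjOn k1 V) (h2 : Set.InjOn k2 V) (P : (Fin n → α) → Prop)
    (hP : ∀ p (τ : Equiv.Perm (Fin n)), P p → P (p ∘ τ)) (hV : ∀ p, P p → ∀ j, p j ∈ V) :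
    {p | Monotone (k1 ∘ p) ∧ P p}.ncard = {p | Monotone (k2 ∘ p) ∧ P p}.ncard := by
  have key : ∀ {δ : Type} [LinearOrder δ] (k : α → δ) (_ : Set.InjOn k V) (p : Fin n → α)
      (τ : Equiv.Perm (Fin n)), P p → Monotone (k ∘ p) → Monotone (k ∘ p ∘ τ) → p ∘ τ = p := by
    intro δ _ k hk p τ hp ha hb
    have := Tuple.unique_monotone (f := k ∘ p) (σ := τ) (τ := 1) hb ha
    ext j
    apply hk (hV _ hp _) (hV _ hp _)
    exact congrFun this j
  apply Set.ncard_congr (fun p _ => p ∘ Tuple.sort (k2 ∘ p))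
  · rintro p ⟨_, hp⟩
    exact ⟨Tuple.monotone_sort (k2 ∘ p), hP _ _ hp⟩
  · rintro p q ⟨hp, hp'⟩ ⟨hq, hq'⟩ h
    have e : q = p ∘ (Tuple.sort (k2 ∘ p) * (Tuple.sort (k2 ∘ q))⁻¹ : Equiv.Perm (Fin n)) := by
      ext j
      have := congrFun h ((Tuple.sort (k2 ∘ q))⁻¹ j)
      simpa using this.symm
    rw [e] at hq ⊢
    exact (key k1 h1 p _ hp' hp hq).symm
  · rintro q ⟨hq, hq'⟩
    refine ⟨q ∘ Tuple.sort (k1 ∘ q), ⟨Tuple.monotone_sort (k1 ∘ q), hP _ _ hq'⟩, ?_⟩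
    have := Tuple.monotone_sort (k2 ∘ (q ∘ Tuple.sort (k1 ∘ q)))
    exact key k2 h2 q (Tuple.sort (k1 ∘ q) * Tuple.sort (k2 ∘ (q ∘ Tuple.sort (k1 ∘ q)))) hq' hq this

lemma sum_iff {n : ℕ} (a : Fin n → ℕ) (s M : ℕ) (hs : s ≤ n) :
    (∑ j ∈ Finset.univ.filter (fun j : Fin n => (j : ℕ) < s), a j) ≤ M ↔
      s ≤ (Finset.univ.filter (fun j : Fin n => psm a j ≤ M)).card := by
  cases s with
  | zero => simp
  | succ t =>
    have cardlt : ∀ u, u ≤ n → (Finset.univ.filter (fun j : Fin n => (j : ℕ) < u)).card = u := by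
      intro u hu
      rw [Fin.card_filter_val_lt]; omega
    change psm a ⟨t, hs⟩ ≤ M ↔ _
    constructor
    · intro h
      rw [← cardlt (t+1) hs]
      apply Finset.card_le_card
      intro j hj
      simp at hj ⊢
      exact le_trans (psm_mono a (show j ≤ ⟨t, hs⟩ from by simp [Fin.le_def]; omega)) h
    · intro h
      by_contra hc
      have : (Finset.univ.filter (fun j : Fin n => psm a j ≤ M)).card ≤ t := by
        rw [← cardlt t (by omega)]
        conv_rhs => rw [cardlt t (by omega), ← cardlt t (by omega)]
        apply Finset.card_le_card
        intro j hj
        simp at hj ⊢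
        by_contra hjt
        exact hc (le_trans (psm_mono a (show ⟨t, hs⟩ ≤ j from by simp [Fin.le_def]; omega)) hj)
      omega

def vld (m : ℕ) (x : ℕ × ℕ) : Prop := 1 ≤ x.2 ∧ x.1 ≤ m ∧ (x.1 = 0 → x.2 = 1)

def enc (m : ℕ) (x : ℕ × ℕ) : ℕ := (x.2 - 1) * m + x.1

def lexk (x : ℕ × ℕ) : ℕ ×ₗ ℕᵒᵈ := toLex (x.1, OrderDual.toDual x.2)

lemma lexk_inj : Function.Injective lexk := by
  intro x y h
  have := toLex.injective h
  simp only [Prod.mk.injEq, OrderDual.toDual_inj] at this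
  exact Prod.ext this.1 this.2

lemma enc_le {m : ℕ} {x : ℕ × ℕ} (hx : vld m x) {s : ℕ} (hs : 1 ≤ s) : enc m x ≤ m * s ↔ x.2 ≤ s := by
  obtain ⟨f, w⟩ := x
  obtain ⟨h1, h2, h3⟩ := hx
  simp only [enc] at *
  obtain ⟨v, rfl⟩ : ∃ v, w = v + 1 := ⟨w - 1, by omega⟩
  simp only [Nat.add_sub_cancel]
  constructor
  · intro h
    by_contra hc
    have : s * m ≤ v * m := Nat.mul_le_mul_right _ (by omega)
    have : f ≠ 0 := fun h0 => by have := h3 h0; omega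
    rw [mul_comm m s] at h
    omega
  · intro h
    have : (v + 1) * m ≤ s * m := Nat.mul_le_mul_right _ h
    nlinarith

lemma enc_inj (m : ℕ) : Set.InjOn (enc m) {x | vld m x} := by
  intro x hx y hy h
  have h2 : x.2 = y.2 := by
    apply le_antisymm
    · rw [← enc_le hx hy.1, h, enc_le hy hy.1]
    · rw [← enc_le hy hx.1, ← h, enc_le hx hx.1]
  have h1 : x.1 = y.1 := by
    simp only [enc, h2] at h; omega
  exact Prod.ext h1 h2

lemma enc_surj (m N x : ℕ) (h : x ≤ m * N) : ∃ y, vld m y ∧ enc m y = x := by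
  rcases Nat.eq_zero_or_pos x with rfl | hx
  · exact ⟨(0, 1), by simp [vld], by simp [enc]⟩
  · have hm : 0 < m := by
      rcases Nat.eq_zero_or_pos m with rfl | hm
      · simp at h; omega
      · exact hm
    refine ⟨((x - 1) % m + 1, (x - 1) / m + 1), ⟨by simp, ?_, by simp⟩, ?_⟩
    · have := Nat.mod_lt (x - 1) hm; simp only; omega
    · simp only [enc, Nat.add_sub_cancel]
      have := Nat.div_add_mod' (x - 1) m
      omega

def cnd (n : ℕ) (σ : List ℕ) (w : Fin n → ℕ) : Prop :=
  ∀ i ∈ Finset.Icc 1 σ.length,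
    pSum σ i ≤ (Finset.univ.filter (fun j : Fin n => w j ≤ pSum σ i)).card

def goodP (n : ℕ) (σ : List ℕ) (m : ℕ) (p : Fin n → ℕ × ℕ) : Prop :=
  (∀ j, vld m (p j)) ∧ cnd n σ (fun j => (p j).2)

lemma cnd_perm {n : ℕ} (σ : List ℕ) (w : Fin n → ℕ) (τ : Equiv.Perm (Fin n)) (h : cnd n σ w) :
    cnd n σ (w ∘ τ) := by
  intro i hi
  refine le_trans (h i hi) (le_of_eq ?_)
  symm
  apply Finset.card_bij (fun j _ => τ j)
  · intro j hj; simpa using hj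
  · intro a _ b _ h; exact τ.injective h
  · intro b hb; exact ⟨τ.symm b, by simpa using hb, by simp⟩

lemma pSum_le (σ : List ℕ) (i : ℕ) : pSum σ i ≤ σ.sum := by
  have := List.sum_take_add_sum_drop σ i
  unfold pSum; omega

lemma cnd_le {n : ℕ} (hn : 0 < n) (σ : List ℕ) (hsum : σ.sum = n) (w : Fin n → ℕ) (h : cnd n σ w) (j : Fin n) :
    w j ≤ n := by
  have hl : 1 ≤ σ.length := by
    rcases σ with _ | ⟨a, l⟩
    · simp at hsum; omega
    · simp
  have := h σ.length (by simp [hl])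
  have e : pSum σ σ.length = n := by simp [pSum, hsum]
  rw [e] at this
  have h2 : Finset.univ.filter (fun j : Fin n => w j ≤ n) = Finset.univ := by
    apply Finset.eq_univ_of_card
    apply le_antisymm (Finset.card_le_univ _)
    simpa using this
  have := Finset.mem_univ j
  rw [← h2] at this
  simpa using this

lemma cnd_enc {n : ℕ} (σ : List ℕ) (hsum : σ.sum = n) (m : ℕ) (p : Fin n → ℕ × ℕ) (hp : ∀ j, vld m (p j))
    (a : Fin n → ℕ) (ha : psm a = enc m ∘ p) :
    cnd n σ (fun j => (p j).2) ↔ ∀ i, 1 ≤ i → i ≤ σ.length →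
    (∑ j ∈ Finset.univ.filter (fun j : Fin n => (j : ℕ) < pSum σ i), a j) ≤ m * pSum σ i := by
  simp only [cnd, Finset.mem_Icc, and_imp]
  refine forall_congr' fun i => forall_congr' fun h1 => forall_congr' fun h2 => ?_
  rw [sum_iff a _ _ (hsum ▸ pSum_le σ i), ha]
  rcases Nat.eq_zero_or_pos (pSum σ i) with h0 | h0
  · simp [h0]
  · simp only [Function.comp_apply, enc_le (hp _) h0]

lemma ehr_eq {n : ℕ} (hn : 0 < n) (σ : List ℕ) (hsum : σ.sum = n) (m : ℕ) :
    ehrCount n σ m = {p | Monotone (enc m ∘ p) ∧ goodP n σ m p}.ncard := by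
  symm
  unfold ehrCount
  apply Set.ncard_congr (fun p _ => dff (enc m ∘ p))
  · rintro p ⟨h1, h2, h3⟩
    exact (cnd_enc σ hsum m p h2 _ (psm_dff _ ((mono_prv _).1 h1))).1 h3
  · rintro p q ⟨h1, h2, h3⟩ ⟨h1', h2', h3'⟩ h
    have := congrArg psm h
    rw [psm_dff _ ((mono_prv _).1 h1), psm_dff _ ((mono_prv _).1 h1')] at this
    funext j
    exact enc_inj m (h2 j) (h2' j) (congrFun this j)
  · intro a ha
    have hl : 1 ≤ σ.length := by
      rcases σ with _ | ⟨a, l⟩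
      · simp at hsum; omega
      · simp
    have hb : ∀ j, psm a j ≤ m * n := by
      rw [psm_le hn]
      have := ha σ.length hl le_rfl
      have e : pSum σ σ.length = n := by simp [pSum, hsum]
      rw [e, Finset.filter_true_of_mem (by intro i _; exact i.2)] at this
      exact this
    choose p hp1 hp2 using fun j => enc_surj m n _ (hb j)
    have hp : psm a = enc m ∘ p := by funext j; exact (hp2 j).symm
    refine ⟨p, ⟨?_, hp1, ?_⟩, ?_⟩
    · rw [← hp]; exact psm_mono a
    · exact (cnd_enc σ hsum m p hp1 a hp).2 ha
    · rw [← hp, dff_psm]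

def dsc {n : ℕ} (w : Fin n → ℕ) (j : Fin n) : ℕ := if prv w 1 j < w j then 1 else 0

lemma sum_dsc {n : ℕ} (w : Fin n → ℕ) : ∑ j, dsc w j = ascCount w := by
  unfold ascCount
  rw [Finset.card_filter]
  rfl

lemma lexk_le (x y : ℕ × ℕ) : lexk x ≤ lexk y ↔ x.1 < y.1 ∨ x.1 = y.1 ∧ y.2 ≤ x.2 := by
  unfold lexk
  rw [Prod.Lex.toLex_le_toLex]
  simp

lemma cond_iff {n : ℕ} (m : ℕ) (p : Fin n → ℕ × ℕ) (hw : ∀ j, 1 ≤ (p j).2) :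
    (Monotone (lexk ∘ p) ∧ ∀ j, vld m (p j)) ↔
    ((∀ j, prv (fun j => (p j).1) 0 j + dsc (fun j => (p j).2) j ≤ (p j).1) ∧ ∀ j, (p j).1 ≤ m) := by
  rw [mono_iff]
  simp only [Function.comp_apply, lexk_le]
  constructor
  · rintro ⟨h1, h2⟩
    refine ⟨fun j => ?_, fun j => (h2 j).2.1⟩
    have a := h1 j
    have b := (h2 j).2.2
    unfold dsc prv
    by_cases h0 : (j : ℕ) = 0
    · simp only [h0, if_true]
      split_ifs <;> omega
    · have := a h0
      simp only [h0, if_false]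
      split_ifs <;> omega
  · rintro ⟨h1, h2⟩
    have h3 : ∀ j : Fin n, (j : ℕ) ≠ 0 → _ := fun j h0 => by
      have := h1 j
      unfold dsc prv at this
      simp only [h0, if_false] at this
      exact this
    refine ⟨fun j h0 => ?_, fun j => ⟨hw j, h2 j, ?_⟩⟩
    · have := h3 j h0
      split_ifs at this <;> omega
    · have : ∀ k (hk : k < n), (p ⟨k, hk⟩).1 = 0 → (p ⟨k, hk⟩).2 = 1 := by
        intro k
        induction k with
        | zero =>
          intro hk h0
          have := h1 ⟨0, hk⟩
          have := hw ⟨0, hk⟩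
          simp only [dsc, prv, if_true] at *
          split_ifs at * <;> omega
        | succ k ih =>
          intro hk h0
          have a := h3 ⟨k+1, hk⟩ (by simp)
          have b := ih (by omega)
          have := hw ⟨k+1, hk⟩
          simp only [Nat.add_sub_cancel] at a
          split_ifs at a <;> omega
      exact this j j.2

open scoped Classical in
lemma ehr_sum {n : ℕ} (hn : 0 < n) (σ : List ℕ) (hsum : σ.sum = n) (m : ℕ) :
    ehrCount n σ m = ∑ w ∈ (Fintype.piFinset fun _ : Fin n => Finset.Icc 1 n).filter (cnd n σ),
      if ascCount w ≤ m then (n + (m - ascCount w)).choose n else 0 := by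
  rw [ehr_eq hn σ hsum m, sort_card (enc m) lexk {x | vld m x} (enc_inj m) lexk_inj.injOn (goodP n σ m)
    (fun p τ h => ⟨fun j => h.1 _, cnd_perm σ _ τ h.2⟩) (fun p h => h.1)]
  have hfin : {p | Monotone (lexk ∘ p) ∧ goodP n σ m p}.Finite := by
    apply Set.Finite.subset (Finset.finite_toSet
      (Fintype.piFinset fun _ : Fin n => Finset.range (m+1) ×ˢ Finset.range (n+1)))
    rintro p ⟨_, h2, h3⟩
    simp only [Finset.mem_coe, Fintype.mem_piFinset, Finset.mem_product, Finset.mem_range]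
    intro j
    have := (h2 j).2.1
    have := cnd_le hn σ hsum _ h3 j
    omega
  rw [Set.ncard_eq_toFinset_card _ hfin]
  rw [Finset.card_eq_sum_card_fiberwise (f := fun p j => (p j).2)
    (t := (Fintype.piFinset fun _ : Fin n => Finset.Icc 1 n).filter (cnd n σ))]
  · apply Finset.sum_congr rfl
    intro w hw
    simp only [Finset.mem_filter, Fintype.mem_piFinset, Finset.mem_Icc] at hw
    rw [← sum_dsc, ← count_f hn, ← Set.ncard_coe_finset]
    apply Set.ncard_congr (fun p _ j => (p j).1)
    · intro p hp
      simp only [Finset.coe_filter, Set.Finite.mem_toFinset, Set.mem_ofPred_eq] at hp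
      obtain ⟨⟨h1, h2, h3⟩, rfl⟩ := hp
      exact (cond_iff m p (fun j => (h2 j).1)).1 ⟨h1, h2⟩
    · intro p q hp hq h
      simp only [Finset.coe_filter, Set.Finite.mem_toFinset, Set.mem_ofPred_eq] at hp hq
      have := hp.2.trans hq.2.symm
      funext j
      exact Prod.ext (congrFun h j) (congrFun this j)
    · intro f hf
      refine ⟨fun j => (f j, w j), ?_, rfl⟩
      have := (cond_iff m (fun j => (f j, w j)) (fun j => (hw.1 j).1)).2 hf
      simp only [Finset.coe_filter, Set.Finite.mem_toFinset, Set.mem_ofPred_eq]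
      exact ⟨⟨this.1, this.2, hw.2⟩, trivial⟩
  · intro p hp
    simp only [Finset.mem_coe, Set.Finite.mem_toFinset, Set.mem_ofPred_eq] at hp
    simp only [Finset.mem_coe, Finset.mem_filter, Fintype.mem_piFinset, Finset.mem_Icc]
    exact ⟨fun j => ⟨(hp.2.1 j).1, cnd_le hn σ hsum _ hp.2.2 j⟩, hp.2.2⟩

open scoped Classical in
/-- The `h^*`-polynomial of the composition polytope `Q_σ` is the ascent
generating polynomial over all words `w ∈ [n]ⁿ` having at least `s_i` entries
`≤ s_i` for every `i ∈ [k]`. -/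
theorem hStar_eq_ascent_polynomial (n : ℕ) (hn : 0 < n) (σ : List ℕ)
    (hpos : ∀ r ∈ σ, 0 < r) (hsum : σ.sum = n) :
    (1 - PowerSeries.X : PowerSeries ℤ) ^ (n + 1) *
        PowerSeries.mk (fun m => (ehrCount n σ m : ℤ)) =
      ∑ w ∈ (Fintype.piFinset fun _ : Fin n => Finset.Icc 1 n).filter
          (fun w : Fin n → ℕ => ∀ i ∈ Finset.Icc 1 σ.length,
            pSum σ i ≤ (Finset.univ.filter (fun j : Fin n => w j ≤ pSum σ i)).card),
        (PowerSeries.X : PowerSeries ℤ) ^ ascCount w := by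
  have key : PowerSeries.mk (fun m => (ehrCount n σ m : ℤ)) =
      (∑ w ∈ (Fintype.piFinset fun _ : Fin n => Finset.Icc 1 n).filter (cnd n σ),
        (PowerSeries.X : PowerSeries ℤ) ^ ascCount w) * (PowerSeries.mk 1) ^ (n + 1) := by
    ext m
    rw [PowerSeries.mk_one_pow_eq_mk_choose_add, Finset.sum_mul, map_sum, PowerSeries.coeff_mk,
      ehr_sum hn σ hsum m]
    push_cast
    apply Finset.sum_congr rfl
    intro w _
    rw [PowerSeries.coeff_X_pow_mul', PowerSeries.coeff_mk]
  rw [key, mul_comm, mul_assoc, ← mul_pow, PowerSeries.mk_one_mul_one_sub_eq_one, one_pow, mul_one]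
  rfl
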